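/- arXiv:2210.14459 — 2 statements merged into one kernel-verified Lean document; each statement's English description precedes it below -/
import Mathlib

section
/- Suppose a PI sequence (h^i)_{i≥0} exists, the detectability assumption holds, the initial stabilizing bound V⁰ ≤ ᾱ_V∘σ holds with ᾱ_V of class K∞, and in addition there exist constants c_W, a_W, ā_V > 0 and ā_W ≥ 0 such that for every s ≥ 0: χ_W(s) ≤ c_W·s, α_W(s) ≥ a_W·s, ᾱ_V(s) ≤ ā_V·s, and ᾱ_W(s) ≤ ā_W·s. Then the stability bound is exponential: there exist C ≥ 1 and λ ∈ [0,1), independent of i, such that for every i ≥ 0, every x ∈ ℝ^n and every k ≥ 0, σ(φ(k,x,h^i)) ≤ C·λ^k·σ(x). -/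
/-!
Policy iteration never increases the cost: the minimality of `h^{i+1}` against the competitor
`h^i(x)` gives `ℓ(x, h^{i+1}(x)) + Vⁱ(x⁺) ≤ Vⁱ(x)`, and telescoping along the closed loop yields
`V^{i+1} ≤ Vⁱ` (`Jcost_le_of_decrease`). Hence every `Vⁱ` obeys the bound `Vⁱ ≤ ā_V σ` of `V⁰`.
The function `Y = W + c_W Vⁱ` is then a Lyapunov function, uniformly in `i`: it satisfies
`Y(x⁺) + a_W σ(x) ≤ Y(x) ≤ (ā_W + c_W ā_V) σ(x)`, which forces geometric decay of `Y`
(`geometric_decay`), while `a_W σ ≤ Y` transfers the decay to `σ`.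
-/

open scoped NNReal ENNReal Topology

noncomputable section

/-- A class-K∞ function on `ℝ≥0 ≃ [0,∞)`: continuous, strictly increasing,
zero at zero, and unbounded. -/
def ClassKInf (α : ℝ≥0 → ℝ≥0) : Prop :=
  Continuous α ∧ StrictMono α ∧ α 0 = 0 ∧ ∀ M : ℝ≥0, ∃ s : ℝ≥0, M ≤ α s

/-- A class-KL function on `[0,∞) × [0,∞)`. -/
def ClassKL (β : ℝ≥0 → ℝ≥0 → ℝ≥0) : Prop :=
  (∀ t, Continuous fun s => β s t) ∧ (∀ t, Monotone fun s => β s t) ∧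
    (∀ t, β 0 t = 0) ∧ (∀ s, Antitone fun t => β s t) ∧
    (∀ s, Filter.Tendsto (fun t => β s t) Filter.atTop (nhds 0))

variable {n m : ℕ}

/-- Closed-loop solution of `x(k+1) = f(x(k), h(x(k)))` from `x`. -/
def phiCL (f : (Fin n → ℝ) → (Fin m → ℝ) → Fin n → ℝ)
    (h : (Fin n → ℝ) → Fin m → ℝ) (x : Fin n → ℝ) : ℕ → Fin n → ℝ
  | 0 => x
  | k + 1 => f (phiCL f h x k) (h (phiCL f h x k))

/-- Infinite-horizon closed-loop cost `J(x,h)`, valued in `[0,∞]`. -/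
def Jcost (f : (Fin n → ℝ) → (Fin m → ℝ) → Fin n → ℝ)
    (ℓ : (Fin n → ℝ) → (Fin m → ℝ) → ℝ≥0)
    (x : Fin n → ℝ) (h : (Fin n → ℝ) → Fin m → ℝ) : ℝ≥0∞ :=
  ∑' k : ℕ, (ℓ (phiCL f h x k) (h (phiCL f h x k)) : ℝ≥0∞)

lemma phiCL_succ' (f : (Fin n → ℝ) → (Fin m → ℝ) → Fin n → ℝ)
    (h : (Fin n → ℝ) → Fin m → ℝ) (x : Fin n → ℝ) (k : ℕ) :
    phiCL f h x (k + 1) = phiCL f h (f x (h x)) k := by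
  induction k with
  | zero => rfl
  | succ k ih =>
    rw [phiCL, ih]
    rfl

/-- Bellman equation for the cost of a fixed policy. -/
lemma Jcost_eq (f : (Fin n → ℝ) → (Fin m → ℝ) → Fin n → ℝ)
    (ℓ : (Fin n → ℝ) → (Fin m → ℝ) → ℝ≥0)
    (x : Fin n → ℝ) (h : (Fin n → ℝ) → Fin m → ℝ) :
    Jcost f ℓ x h = (ℓ x (h x) : ℝ≥0∞) + Jcost f ℓ (f x (h x)) h := by
  unfold Jcost
  rw [tsum_eq_zero_add' ENNReal.summable]
  simp only [phiCL_succ']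
  rfl

/-- Verification principle: a function that decreases by at least the stage cost along the
closed loop of `h` dominates the cost of `h`. -/
lemma Jcost_le_of_decrease (f : (Fin n → ℝ) → (Fin m → ℝ) → Fin n → ℝ)
    (ℓ : (Fin n → ℝ) → (Fin m → ℝ) → ℝ≥0)
    (h : (Fin n → ℝ) → Fin m → ℝ) (V : (Fin n → ℝ) → ℝ≥0∞)
    (hV : ∀ x, (ℓ x (h x) : ℝ≥0∞) + V (f x (h x)) ≤ V x) (x : Fin n → ℝ) :
    Jcost f ℓ x h ≤ V x := by
  have key : ∀ N : ℕ, (∑ k ∈ Finset.range N,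
      (ℓ (phiCL f h x k) (h (phiCL f h x k)) : ℝ≥0∞)) + V (phiCL f h x N) ≤ V x := by
    intro N
    induction N with
    | zero => simp [phiCL]
    | succ N ih =>
      rw [Finset.sum_range_succ, add_assoc]
      exact le_trans (by gcongr; exact hV _) ih
  unfold Jcost
  rw [ENNReal.tsum_eq_iSup_nat]
  exact iSup_le fun N => le_trans le_self_add (key N)

/-- Geometric decay of a sequence `Y` whose decrement dominates `a * s`, where `Y ≤ r * s`.
The ratio `r / (r + a)` is slightly larger than the optimal `1 - a / r`, but it avoids truncated
subtraction in `ℝ≥0` and the division by `r`, which may vanish. -/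
lemma geometric_decay (a r : ℝ≥0) (ha : 0 < a) (Y s : ℕ → ℝ≥0)
    (hdec : ∀ k, Y (k + 1) + a * s k ≤ Y k) (hup : ∀ k, Y k ≤ r * s k) (k : ℕ) :
    Y k ≤ (r / (r + a)) ^ k * Y 0 := by
  have hpos : 0 < r + a := by positivity
  have step : ∀ k, Y (k + 1) ≤ r / (r + a) * Y k := by
    intro k
    rw [div_mul_eq_mul_div, le_div_iff₀ hpos]
    have h1 : Y (k + 1) * r + a * s k * r ≤ Y k * r := by
      rw [← add_mul]; gcongr; exact hdec k
    have h2 : Y (k + 1) * a ≤ r * s k * a := by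
      gcongr
      exact (le_self_add.trans (hdec k)).trans (hup k)
    calc Y (k + 1) * (r + a) = Y (k + 1) * r + Y (k + 1) * a := by ring
      _ ≤ Y (k + 1) * r + r * s k * a := by gcongr
      _ = Y (k + 1) * r + a * s k * r := by ring
      _ ≤ Y k * r := h1
      _ = r * Y k := by ring
  induction k with
  | zero => simp
  | succ k ih =>
    calc Y (k + 1) ≤ r / (r + a) * Y k := step k
      _ ≤ r / (r + a) * ((r / (r + a)) ^ k * Y 0) := by gcongr
      _ = _ := by ring

/-- under the additional linear bounds on the comparison functions,
the PI stability bound is exponential: `σ(φ(k,x,hⁱ)) ≤ C·λᵏ·σ(x)` with `C ≥ 1`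
and `λ ∈ [0,1)` independent of `i`. -/
theorem pi_recursive_exponential_stability
    (f : (Fin n → ℝ) → (Fin m → ℝ) → Fin n → ℝ)
    (ℓ : (Fin n → ℝ) → (Fin m → ℝ) → ℝ≥0)
    (Uset : (Fin n → ℝ) → Set (Fin m → ℝ))
    (hUne : ∀ x, (Uset x).Nonempty)
    (σ : (Fin n → ℝ) → ℝ≥0) (hσ : Continuous σ)
    -- PI sequence: admissible policies, each `h^{i+1}(x)` minimizing
    -- `u ↦ ℓ(x,u) + Vⁱ(f(x,u))` over `U(x)` with `Vⁱ = J(·, hⁱ)`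
    (hseq : ℕ → (Fin n → ℝ) → Fin m → ℝ)
    (hadm : ∀ i x, hseq i x ∈ Uset x)
    (hPI : ∀ i x, ∀ u ∈ Uset x,
      (ℓ x (hseq (i + 1) x) : ℝ≥0∞) + Jcost f ℓ (f x (hseq (i + 1) x)) (hseq i)
        ≤ (ℓ x u : ℝ≥0∞) + Jcost f ℓ (f x u) (hseq i))
    -- detectability assumption
    (W : (Fin n → ℝ) → ℝ≥0) (hWcont : Continuous W)
    (alphaW chiW : ℝ≥0 → ℝ≥0) (halphaW : ClassKInf alphaW) (hchiW : ClassKInf chiW)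
    (alphaWbar : ℝ≥0 → ℝ≥0) (halphaWbar_cont : Continuous alphaWbar)
    (halphaWbar_mono : Monotone alphaWbar) (halphaWbar_zero : alphaWbar 0 = 0)
    (hdet1 : ∀ x, W x ≤ alphaWbar (σ x))
    (hdet2 : ∀ x, ∀ u ∈ Uset x, W (f x u) + alphaW (σ x) ≤ W x + chiW (ℓ x u))
    -- initial stabilizing bound `V⁰ ≤ ᾱ_V ∘ σ`
    (alphaV : ℝ≥0 → ℝ≥0) (halphaV : ClassKInf alphaV)
    (hV0 : ∀ x, Jcost f ℓ x (hseq 0) ≤ (alphaV (σ x) : ℝ≥0∞))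
    -- additional linear bounds
    (cW aW aVbar : ℝ≥0) (aWbar : ℝ≥0) (hcW : 0 < cW) (haW : 0 < aW) (haVbar : 0 < aVbar)
    (hchi_lin : ∀ s : ℝ≥0, chiW s ≤ cW * s)
    (halphaW_lin : ∀ s : ℝ≥0, aW * s ≤ alphaW s)
    (halphaV_lin : ∀ s : ℝ≥0, alphaV s ≤ aVbar * s)
    (halphaWbar_lin : ∀ s : ℝ≥0, alphaWbar s ≤ aWbar * s) :
    ∃ (C lam : ℝ≥0), 1 ≤ C ∧ lam < 1 ∧
      ∀ (i : ℕ) (x : Fin n → ℝ) (k : ℕ),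
        σ (phiCL f (hseq i) x k) ≤ C * lam ^ k * σ x := by
  have hJ : ∀ i x, Jcost f ℓ x (hseq i) ≤ Jcost f ℓ x (hseq 0) := by
    intro i
    induction i with
    | zero => exact fun x => le_rfl
    | succ i ih =>
      intro x
      refine (Jcost_le_of_decrease f ℓ (hseq (i + 1)) (fun y => Jcost f ℓ y (hseq i))
        (fun y => ?_) x).trans (ih x)
      exact (hPI i y _ (hadm i y)).trans (Jcost_eq f ℓ y (hseq i)).ge
  have hfin : ∀ i x, Jcost f ℓ x (hseq i) ≤ ((aVbar * σ x : ℝ≥0) : ℝ≥0∞) := fun i x =>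
    ((hJ i x).trans (hV0 x)).trans (ENNReal.coe_le_coe.2 (halphaV_lin _))
  -- All costs are finite, so the Lyapunov argument can run in `ℝ≥0`.
  have hex : ∀ i x, ∃ v : ℝ≥0, (v : ℝ≥0∞) = Jcost f ℓ x (hseq i) := fun i x =>
    ⟨_, ENNReal.coe_toNNReal (ne_top_of_le_ne_top ENNReal.coe_ne_top (hfin i x))⟩
  choose V hV using hex
  have hVle : ∀ i x, V i x ≤ aVbar * σ x := by
    intro i x
    have := hfin i x
    rw [← hV] at this
    exact_mod_cast this
  have hVeq : ∀ i x, V i x = ℓ x (hseq i x) + V i (f x (hseq i x)) := by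
    intro i x
    have := Jcost_eq f ℓ x (hseq i)
    rw [← hV, ← hV] at this
    exact_mod_cast this
  have hdec : ∀ i x, (W (f x (hseq i x)) + cW * V i (f x (hseq i x))) + aW * σ x
      ≤ W x + cW * V i x := by
    intro i x
    calc (W (f x (hseq i x)) + cW * V i (f x (hseq i x))) + aW * σ x
        ≤ (W (f x (hseq i x)) + cW * V i (f x (hseq i x))) + alphaW (σ x) := by
          gcongr; exact halphaW_lin _
      _ = (W (f x (hseq i x)) + alphaW (σ x)) + cW * V i (f x (hseq i x)) := by ring
      _ ≤ (W x + cW * ℓ x (hseq i x)) + cW * V i (f x (hseq i x)) := by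
          refine add_le_add ((hdet2 x _ (hadm i x)).trans ?_) le_rfl
          gcongr
          exact hchi_lin _
      _ = W x + cW * V i x := by rw [hVeq i x]; ring
  have hup : ∀ i x, W x + cW * V i x ≤ (aWbar + cW * aVbar) * σ x := by
    intro i x
    calc W x + cW * V i x ≤ aWbar * σ x + cW * (aVbar * σ x) := by
          gcongr
          · exact (hdet1 x).trans (halphaWbar_lin _)
          · exact hVle i x
      _ = _ := by ring
  set r := aWbar + cW * aVbar with hr
  -- The summand `1` in the constant secures `1 ≤ C`.
  refine ⟨1 + r / aW, r / (r + aW), le_self_add, ?_, fun i x k => ?_⟩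
  · rw [div_lt_one (by positivity)]
    exact lt_add_of_pos_right _ haW
  · have hg := geometric_decay aW r haW
      (fun k => W (phiCL f (hseq i) x k) + cW * V i (phiCL f (hseq i) x k))
      (fun k => σ (phiCL f (hseq i) x k)) (fun k => hdec i _) (fun k => hup i _) k
    have hlow : aW * σ (phiCL f (hseq i) x k) ≤ (r / (r + aW)) ^ k * (r * σ x) := by
      refine (le_add_self.trans (hdec i _)).trans (hg.trans ?_)
      gcongr
      exact hup i x
    have hle : σ (phiCL f (hseq i) x k) ≤ r / aW * (r / (r + aW)) ^ k * σ x := by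
      refine le_of_mul_le_mul_left (hlow.trans_eq ?_) haW
      field_simp
    refine hle.trans ?_
    gcongr
    exact le_add_self

end
end

section
/- Suppose the regularity assumption, the detectability assumption, and the initial stabilizing bound V_r⁰ ≤ ᾱ_V∘σ (with ᾱ_V of class K∞) hold. Then the PI⁺ recursion is recursively feasible: for every i ≥ 0 and every x ∈ ℝ^n, the sets H^i(x), H_r^i(x) and H_r^{*,i}(x) are nonempty (with H⁰(x) = H_r⁰(x) = H_r^{*,0}(x) := {h⁰(x)}). -/
/-!
The invariant carried along the recursion is `PIInv`: the value function `V = V_rⁱ` is lower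
semicontinuous, satisfies `V ≤ ᾱ_V ∘ σ`, and dominates its one-step Bellman infimum over `U`.

* Under the invariant, every minimization over `U(x)` can be restricted to a compact set, so
  `H(x) = Himp V x` is nonempty (`PIInv.himp_nonempty`). Since `ℓ ≤ V ≤ ᾱ_V ∘ σ` along `H`, the
  map `H` is locally bounded (`PIInv.himp_locallyBounded`).
* The regularization `H_r` has as graph the closure of the graph of `H` (`mem_hreg_iff`). Hence it
  contains `H`, is contained in `U`, has closed graph, and is locally bounded.
* For a map `K` with nonempty values, closed graph and locally bounded, the infimum over selections
  of the infinite-horizon cost equals the supremum of the finite-horizon value functions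
  (`iInf_jcost_eq`). Each of these is lower semicontinuous by a parametric minimization argument
  (`lsc_iInf`), hence so is their supremum.
* Policy improvement gives `V_rⁱ⁺¹ ≤ V_rⁱ` (`jcost_le_of_bellman` applied to a selection of `H`),
  and splitting off the first stage of the cost gives the Bellman inequality for `V_rⁱ⁺¹`. So the
  invariant propagates (`PIInv.next`), and `H_r^{*,i+1}(x)` is the set of minimizers of a lower
  semicontinuous function over a nonempty compact set.
-/

open scoped NNReal ENNReal Topology

noncomputable section

variable {n m : ℕ}

/-- Improvement step: minimizers of `u ↦ ℓ(x,u) + V(f(x,u))` over `U(x)`. -/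
def Himp (f : (Fin n → ℝ) → (Fin m → ℝ) → Fin n → ℝ)
    (ℓ : (Fin n → ℝ) → (Fin m → ℝ) → ℝ≥0)
    (Uset : (Fin n → ℝ) → Set (Fin m → ℝ))
    (V : (Fin n → ℝ) → ℝ≥0∞) (x : Fin n → ℝ) : Set (Fin m → ℝ) :=
  {u ∈ Uset x | ∀ u' ∈ Uset x,
    (ℓ x u : ℝ≥0∞) + V (f x u) ≤ (ℓ x u' : ℝ≥0∞) + V (f x u')}

/-- Outer semicontinuous regularization of a set-valued map:
`H_r(x) = ⋂_{δ>0} closure(∪_{|y-x|≤δ} H(y))`. -/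
def Hreg (H : (Fin n → ℝ) → Set (Fin m → ℝ)) (x : Fin n → ℝ) : Set (Fin m → ℝ) :=
  ⋂ (δ : ℝ) (_ : 0 < δ), closure (⋃ y ∈ Metric.closedBall x δ, H y)

/-- The PI⁺ value functions: `V_r⁰ = J(·,h⁰)` and `V_r^{i+1}(x)` is the
infimum in `[0,∞]` of `J(x,h)` over all selections `h` of
`H_r^{i+1} = Hreg (Himp V_r^i)`. -/
def VR (f : (Fin n → ℝ) → (Fin m → ℝ) → Fin n → ℝ)
    (ℓ : (Fin n → ℝ) → (Fin m → ℝ) → ℝ≥0)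
    (Uset : (Fin n → ℝ) → Set (Fin m → ℝ))
    (h0 : (Fin n → ℝ) → Fin m → ℝ) : ℕ → (Fin n → ℝ) → ℝ≥0∞
  | 0 => fun x => Jcost f ℓ x h0
  | i + 1 => fun x =>
      ⨅ (h : (Fin n → ℝ) → Fin m → ℝ)
        (_ : ∀ z, h z ∈ Hreg (Himp f ℓ Uset (VR f ℓ Uset h0 i)) z),
        Jcost f ℓ x h

/-- The PI⁺ improvement maps `Hⁱ` (with `H⁰(x) = {h⁰(x)}`). -/
def HseqPI (f : (Fin n → ℝ) → (Fin m → ℝ) → Fin n → ℝ)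
    (ℓ : (Fin n → ℝ) → (Fin m → ℝ) → ℝ≥0)
    (Uset : (Fin n → ℝ) → Set (Fin m → ℝ))
    (h0 : (Fin n → ℝ) → Fin m → ℝ) : ℕ → (Fin n → ℝ) → Set (Fin m → ℝ)
  | 0 => fun x => {h0 x}
  | i + 1 => Himp f ℓ Uset (VR f ℓ Uset h0 i)

/-- The PI⁺ regularized maps `H_rⁱ` (with `H_r⁰(x) = {h⁰(x)}`). -/
def HrseqPI (f : (Fin n → ℝ) → (Fin m → ℝ) → Fin n → ℝ)
    (ℓ : (Fin n → ℝ) → (Fin m → ℝ) → ℝ≥0)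
    (Uset : (Fin n → ℝ) → Set (Fin m → ℝ))
    (h0 : (Fin n → ℝ) → Fin m → ℝ) : ℕ → (Fin n → ℝ) → Set (Fin m → ℝ)
  | 0 => fun x => {h0 x}
  | i + 1 => Hreg (Himp f ℓ Uset (VR f ℓ Uset h0 i))

/-- The PI⁺ selected maps `H_r^{*,i}`: minimizers of
`u ↦ ℓ(x,u) + V_r^i(f(x,u))` over `H_r^i(x)` (with `H_r^{*,0}(x) = {h⁰(x)}`). -/
def HstarPI (f : (Fin n → ℝ) → (Fin m → ℝ) → Fin n → ℝ)
    (ℓ : (Fin n → ℝ) → (Fin m → ℝ) → ℝ≥0)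
    (Uset : (Fin n → ℝ) → Set (Fin m → ℝ))
    (h0 : (Fin n → ℝ) → Fin m → ℝ) : ℕ → (Fin n → ℝ) → Set (Fin m → ℝ)
  | 0 => fun x => {h0 x}
  | i + 1 => fun x =>
      {u ∈ HrseqPI f ℓ Uset h0 (i + 1) x |
        ∀ u' ∈ HrseqPI f ℓ Uset h0 (i + 1) x,
          (ℓ x u : ℝ≥0∞) + VR f ℓ Uset h0 (i + 1) (f x u)
            ≤ (ℓ x u' : ℝ≥0∞) + VR f ℓ Uset h0 (i + 1) (f x u')}

/-! ### Parametric minimization -/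

/-- `K` maps some neighbourhood of every point into a common compact set. -/
def LocallyBdd (K : (Fin n → ℝ) → Set (Fin m → ℝ)) : Prop :=
  ∀ x, ∃ S ∈ 𝓝 x, ∃ C : Set (Fin m → ℝ), IsCompact C ∧ ∀ z ∈ S, K z ⊆ C

/-- The graph of `K` is closed. -/
def ClosedGraph (K : (Fin n → ℝ) → Set (Fin m → ℝ)) : Prop :=
  IsClosed {p : (Fin n → ℝ) × (Fin m → ℝ) | p.2 ∈ K p.1}

lemma ClosedGraph.isClosed {K : (Fin n → ℝ) → Set (Fin m → ℝ)} (hK : ClosedGraph K)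
    (x : Fin n → ℝ) : IsClosed (K x) :=
  IsClosed.preimage (f := fun u : Fin m → ℝ => (x, u)) (by fun_prop) hK

lemma ClosedGraph.isCompact {K : (Fin n → ℝ) → Set (Fin m → ℝ)} (hK : ClosedGraph K)
    (hb : LocallyBdd K) (x : Fin n → ℝ) : IsCompact (K x) := by
  obtain ⟨S, hS, C, hC, h⟩ := hb x
  exact hC.of_isClosed_subset (hK.isClosed x) (h x (mem_of_mem_nhds hS))

/-- Lower semicontinuity of the marginal function of a parametric minimization. -/
lemma lsc_iInf {K : (Fin n → ℝ) → Set (Fin m → ℝ)} (hK : ClosedGraph K) (hb : LocallyBdd K)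
    {g : (Fin n → ℝ) × (Fin m → ℝ) → ℝ≥0∞} (hg : LowerSemicontinuous g) :
    LowerSemicontinuous fun x => ⨅ u ∈ K x, g (x, u) := by
  intro x a ha
  obtain ⟨b, hab, hbx⟩ := exists_between ha
  obtain ⟨S, hS, C, hC, hSC⟩ := hb x
  have key : ∀ᶠ y in 𝓝 x, ∀ u ∈ C, u ∈ K y → b < g (y, u) := by
    apply hC.eventually_forall_of_forall_eventually
    intro u _
    by_cases hu : u ∈ K x
    · have h1 : b < g (x, u) := hbx.trans_le (iInf₂_le u hu)
      filter_upwards [hg (x, u) b h1] with p hp _ using hp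
    · have h1 : {p : (Fin n → ℝ) × (Fin m → ℝ) | p.2 ∈ K p.1}ᶜ ∈ 𝓝 (x, u) :=
        hK.isOpen_compl.mem_nhds hu
      filter_upwards [h1] with p hp hp' using absurd hp' hp
  filter_upwards [key, hS] with y hy hyS
  exact hab.trans_le (le_iInf₂ fun u hu => (hy u (hSC y hyS hu) hu).le)

/-- The one-step cost-to-go `(x,u) ↦ ℓ(x,u) + V(f(x,u))` inherits lower semicontinuity. -/
lemma lsc_stage {f : (Fin n → ℝ) → (Fin m → ℝ) → Fin n → ℝ}
    {ℓ : (Fin n → ℝ) → (Fin m → ℝ) → ℝ≥0}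
    (hf : Continuous fun p : (Fin n → ℝ) × (Fin m → ℝ) => f p.1 p.2)
    (hl : Continuous fun p : (Fin n → ℝ) × (Fin m → ℝ) => ℓ p.1 p.2)
    {V : (Fin n → ℝ) → ℝ≥0∞} (hV : LowerSemicontinuous V) :
    LowerSemicontinuous fun p : (Fin n → ℝ) × (Fin m → ℝ) =>
      (ℓ p.1 p.2 : ℝ≥0∞) + V (f p.1 p.2) :=
  (ENNReal.continuous_coe.comp hl).lowerSemicontinuous.add (hV.comp hf)

lemma lsc_stage_section {f : (Fin n → ℝ) → (Fin m → ℝ) → Fin n → ℝ}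
    {ℓ : (Fin n → ℝ) → (Fin m → ℝ) → ℝ≥0}
    (hf : Continuous fun p : (Fin n → ℝ) × (Fin m → ℝ) => f p.1 p.2)
    (hl : Continuous fun p : (Fin n → ℝ) × (Fin m → ℝ) => ℓ p.1 p.2)
    {V : (Fin n → ℝ) → ℝ≥0∞} (hV : LowerSemicontinuous V) (x : Fin n → ℝ) :
    LowerSemicontinuous fun u : Fin m → ℝ => (ℓ x u : ℝ≥0∞) + V (f x u) :=
  (lsc_stage hf hl hV).comp (Continuous.prodMk_right x)

/-- The cost splits into its first stage and the cost from the successor state. -/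
lemma jcost_eq (f : (Fin n → ℝ) → (Fin m → ℝ) → Fin n → ℝ)
    (ℓ : (Fin n → ℝ) → (Fin m → ℝ) → ℝ≥0) (x : Fin n → ℝ) (h : (Fin n → ℝ) → Fin m → ℝ) :
    Jcost f ℓ x h = ℓ x (h x) + Jcost f ℓ (f x (h x)) h := by
  unfold Jcost
  rw [tsum_eq_zero_add' ENNReal.summable]
  simp only [phiCL_succ']
  rfl

/-- A nonnegative supersolution of the Bellman equation for `h` dominates the cost of `h`. -/
lemma jcost_le_of_bellman {f : (Fin n → ℝ) → (Fin m → ℝ) → Fin n → ℝ}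
    {ℓ : (Fin n → ℝ) → (Fin m → ℝ) → ℝ≥0} {V : (Fin n → ℝ) → ℝ≥0∞}
    {h : (Fin n → ℝ) → Fin m → ℝ}
    (hV : ∀ x, (ℓ x (h x) : ℝ≥0∞) + V (f x (h x)) ≤ V x) (x : Fin n → ℝ) :
    Jcost f ℓ x h ≤ V x := by
  have key : ∀ N : ℕ, (∑ k ∈ Finset.range N,
      (ℓ (phiCL f h x k) (h (phiCL f h x k)) : ℝ≥0∞)) + V (phiCL f h x N) ≤ V x := by
    intro N
    induction N with
    | zero => simp [phiCL]
    | succ N ih =>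
      rw [Finset.sum_range_succ, add_assoc]
      exact (add_le_add le_rfl (hV _)).trans ih
  exact ENNReal.tsum_le_of_sum_range_le fun N => le_self_add.trans (key N)

/-- Finite-horizon optimal value with `N` stages, inputs constrained to `K` and zero terminal
cost. -/
def finVal (f : (Fin n → ℝ) → (Fin m → ℝ) → Fin n → ℝ)
    (ℓ : (Fin n → ℝ) → (Fin m → ℝ) → ℝ≥0) (K : (Fin n → ℝ) → Set (Fin m → ℝ)) :
    ℕ → (Fin n → ℝ) → ℝ≥0∞
  | 0 => fun _ => 0
  | N + 1 => fun x => ⨅ u ∈ K x, (ℓ x u : ℝ≥0∞) + finVal f ℓ K N (f x u)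

section FiniteHorizon

variable {f : (Fin n → ℝ) → (Fin m → ℝ) → Fin n → ℝ}
  {ℓ : (Fin n → ℝ) → (Fin m → ℝ) → ℝ≥0} {K : (Fin n → ℝ) → Set (Fin m → ℝ)}

lemma finVal_le_succ (N : ℕ) (x : Fin n → ℝ) :
    finVal f ℓ K N x ≤ finVal f ℓ K (N + 1) x := by
  induction N generalizing x with
  | zero => exact zero_le
  | succ N ih => exact iInf₂_mono fun u _ => add_le_add le_rfl (ih _)

lemma finVal_le_jcost {h : (Fin n → ℝ) → Fin m → ℝ} (hh : ∀ z, h z ∈ K z) (N : ℕ)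
    (x : Fin n → ℝ) : finVal f ℓ K N x ≤ Jcost f ℓ x h := by
  induction N generalizing x with
  | zero => exact zero_le
  | succ N ih =>
    rw [jcost_eq]
    exact (iInf₂_le (h x) (hh x)).trans (add_le_add le_rfl (ih _))

lemma lsc_finVal
    (hf : Continuous fun p : (Fin n → ℝ) × (Fin m → ℝ) => f p.1 p.2)
    (hl : Continuous fun p : (Fin n → ℝ) × (Fin m → ℝ) => ℓ p.1 p.2)
    (hK : ClosedGraph K) (hb : LocallyBdd K) (N : ℕ) :
    LowerSemicontinuous (finVal f ℓ K N) := by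
  induction N with
  | zero => exact lowerSemicontinuous_const
  | succ N ih => exact lsc_iInf hK hb (lsc_stage hf hl ih)

/-- The limit of the finite-horizon values satisfies the Bellman inequality with an attaining
input, obtained from Cantor's intersection theorem. -/
lemma exists_bellman
    (hf : Continuous fun p : (Fin n → ℝ) × (Fin m → ℝ) => f p.1 p.2)
    (hl : Continuous fun p : (Fin n → ℝ) × (Fin m → ℝ) => ℓ p.1 p.2)
    (hK : ClosedGraph K) (hb : LocallyBdd K) (hne : ∀ x, (K x).Nonempty) (x : Fin n → ℝ) :
    ∃ u ∈ K x, (ℓ x u : ℝ≥0∞) + ⨆ N, finVal f ℓ K N (f x u) ≤ ⨆ N, finVal f ℓ K N x := by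
  set L : ℝ≥0∞ := ⨆ N, finVal f ℓ K N x
  let A : ℕ → Set (Fin m → ℝ) := fun N =>
    K x ∩ {u | (ℓ x u : ℝ≥0∞) + finVal f ℓ K N (f x u) ≤ L}
  have hlsc := fun N => lsc_stage_section hf hl (lsc_finVal hf hl hK hb N) x
  have hAcl : ∀ N, IsClosed (A N) := fun N =>
    (hK.isClosed x).inter ((hlsc N).isClosed_preimage L)
  have hAne : ∀ N, (A N).Nonempty := by
    intro N
    obtain ⟨u, hu, hmin⟩ :=
      LowerSemicontinuousOn.exists_isMinOn (hne x) (hK.isCompact hb x)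
        ((hlsc N).lowerSemicontinuousOn _)
    refine ⟨u, hu, ?_⟩
    exact (le_iInf₂ fun v hv => hmin hv).trans (le_iSup (fun N => finVal f ℓ K N x) (N + 1))
  obtain ⟨u, hu⟩ := IsCompact.nonempty_iInter_of_sequence_nonempty_isCompact_isClosed A
    (fun N v hv => ⟨hv.1, (add_le_add le_rfl (finVal_le_succ N _)).trans hv.2⟩)
    hAne ((hK.isCompact hb x).of_isClosed_subset (hAcl 0) Set.inter_subset_left) hAcl
  rw [Set.mem_iInter] at hu
  refine ⟨u, (hu 0).1, ?_⟩
  rw [ENNReal.add_iSup]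
  exact iSup_le fun N => (hu N).2

/-- Optimizing the infinite-horizon cost over selections of `K` gives the limit of the
finite-horizon values. -/
lemma iInf_jcost_eq
    (hf : Continuous fun p : (Fin n → ℝ) × (Fin m → ℝ) => f p.1 p.2)
    (hl : Continuous fun p : (Fin n → ℝ) × (Fin m → ℝ) => ℓ p.1 p.2)
    (hK : ClosedGraph K) (hb : LocallyBdd K) (hne : ∀ x, (K x).Nonempty) (x : Fin n → ℝ) :
    (⨅ (h : (Fin n → ℝ) → Fin m → ℝ) (_ : ∀ z, h z ∈ K z), Jcost f ℓ x h)
      = ⨆ N, finVal f ℓ K N x := by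
  apply le_antisymm
  · choose h hhK hh using exists_bellman hf hl hK hb hne
    exact (iInf₂_le h hhK).trans
      (jcost_le_of_bellman (V := fun x => ⨆ N, finVal f ℓ K N x) hh x)
  · exact le_iInf₂ fun h hh => iSup_le fun N => finVal_le_jcost hh N x

end FiniteHorizon

/-! ### Outer semicontinuous regularization -/

/-- The graph of `Hreg H` is the closure of the graph of `H`. -/
lemma mem_hreg_iff {H : (Fin n → ℝ) → Set (Fin m → ℝ)} {x : Fin n → ℝ} {u : Fin m → ℝ} :
    u ∈ Hreg H x ↔ (x, u) ∈ closure {p : (Fin n → ℝ) × (Fin m → ℝ) | p.2 ∈ H p.1} := by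
  simp only [Hreg, Set.mem_iInter, Metric.mem_closure_iff]
  constructor
  · intro h ε hε
    obtain ⟨v, hv, huv⟩ := h (ε / 2) (by positivity) ε hε
    simp only [Set.mem_iUnion] at hv
    obtain ⟨y, hy, hvy⟩ := hv
    refine ⟨(y, v), hvy, ?_⟩
    rw [Metric.mem_closedBall, dist_comm] at hy
    exact max_lt (by simp only; linarith) huv
  · intro h δ hδ ε hε
    obtain ⟨⟨y, v⟩, hvy, hd⟩ := h (min δ ε) (lt_min hδ hε)
    have hd1 : dist x y < min δ ε := (le_max_left _ _).trans_lt hd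
    have hd2 : dist u v < min δ ε := (le_max_right _ _).trans_lt hd
    refine ⟨v, ?_, hd2.trans_le (min_le_right _ _)⟩
    simp only [Set.mem_iUnion]
    refine ⟨y, ?_, hvy⟩
    rw [Metric.mem_closedBall, dist_comm]
    exact (hd1.trans_le (min_le_left _ _)).le

lemma subset_hreg (H : (Fin n → ℝ) → Set (Fin m → ℝ)) (x : Fin n → ℝ) : H x ⊆ Hreg H x :=
  fun _ hu => mem_hreg_iff.2 (subset_closure hu)

lemma closedGraph_hreg (H : (Fin n → ℝ) → Set (Fin m → ℝ)) : ClosedGraph (Hreg H) := by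
  have : {p : (Fin n → ℝ) × (Fin m → ℝ) | p.2 ∈ Hreg H p.1}
      = closure {p : (Fin n → ℝ) × (Fin m → ℝ) | p.2 ∈ H p.1} :=
    Set.ext fun p => mem_hreg_iff
  rw [ClosedGraph, this]
  exact isClosed_closure

lemma hreg_subset {H U : (Fin n → ℝ) → Set (Fin m → ℝ)} (hU : ClosedGraph U)
    (hHU : ∀ x, H x ⊆ U x) (x : Fin n → ℝ) : Hreg H x ⊆ U x := fun _ hu =>
  closure_minimal (s := {p : (Fin n → ℝ) × (Fin m → ℝ) | p.2 ∈ H p.1})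
    (fun p hp => hHU p.1 hp) hU (mem_hreg_iff.1 hu)

lemma locallyBdd_hreg {H : (Fin n → ℝ) → Set (Fin m → ℝ)} (hH : LocallyBdd H) :
    LocallyBdd (Hreg H) := by
  intro x
  obtain ⟨S, hS, C, hC, hSC⟩ := hH x
  refine ⟨interior S, interior_mem_nhds.2 hS, C, hC, fun z hz u hu => ?_⟩
  obtain ⟨δ, hδ, hball⟩ := Metric.nhds_basis_closedBall.mem_iff.1 (mem_interior_iff_mem_nhds.1 hz)
  have h1 : u ∈ closure (⋃ y ∈ Metric.closedBall z δ, H y) := by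
    have := Set.mem_iInter.1 hu δ
    exact Set.mem_iInter.1 this hδ
  exact closure_minimal (Set.iUnion₂_subset fun y hy => hSC y (hball hy)) hC.isClosed h1

/-! ### The invariant of the recursion -/

/-- The invariant of the value functions along the recursion, relative to a finite upper bound
`b`. The third field is the Bellman inequality `inf_{u ∈ U(x)} (ℓ(x,u) + V(f(x,u))) ≤ V(x)`. -/
structure PIInv (f : (Fin n → ℝ) → (Fin m → ℝ) → Fin n → ℝ)
    (ℓ : (Fin n → ℝ) → (Fin m → ℝ) → ℝ≥0) (Uset : (Fin n → ℝ) → Set (Fin m → ℝ))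
    (b : (Fin n → ℝ) → ℝ≥0) (V : (Fin n → ℝ) → ℝ≥0∞) : Prop where
  lsc : LowerSemicontinuous V
  le_bound : ∀ x, V x ≤ b x
  bellman : ∀ x, (⨅ u ∈ Uset x, (ℓ x u : ℝ≥0∞) + V (f x u)) ≤ V x

section Invariant

variable {f : (Fin n → ℝ) → (Fin m → ℝ) → Fin n → ℝ}
  {ℓ : (Fin n → ℝ) → (Fin m → ℝ) → ℝ≥0} {Uset : (Fin n → ℝ) → Set (Fin m → ℝ)}
  {b : (Fin n → ℝ) → ℝ≥0} {V : (Fin n → ℝ) → ℝ≥0∞}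

lemma PIInv.le_of_mem_himp (hV : PIInv f ℓ Uset b V) {x : Fin n → ℝ} {u : Fin m → ℝ}
    (hu : u ∈ Himp f ℓ Uset V x) : (ℓ x u : ℝ≥0∞) + V (f x u) ≤ V x :=
  (le_iInf₂ fun v hv => hu.2 v hv).trans (hV.bellman x)

lemma PIInv.himp_nonempty (hV : PIInv f ℓ Uset b V)
    (hf : Continuous fun p : (Fin n → ℝ) × (Fin m → ℝ) => f p.1 p.2)
    (hl : Continuous fun p : (Fin n → ℝ) × (Fin m → ℝ) => ℓ p.1 p.2)
    (hlb : ∀ (x : Fin n → ℝ) (a : ℝ), ∃ S ∈ 𝓝 x, ∃ B : Set (Fin m → ℝ),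
      Bornology.IsBounded B ∧ ∀ z ∈ S, {u : Fin m → ℝ | (ℓ z u : ℝ) ≤ a} ⊆ B)
    (hU : ClosedGraph Uset) (x : Fin n → ℝ) : (Himp f ℓ Uset V x).Nonempty := by
  -- The slack `+ 1` makes the level exceed the Bellman infimum strictly.
  set a : ℝ≥0 := b x + 1 with ha
  obtain ⟨S, hS, B, hB, hSB⟩ := hlb x a
  have hin : ∀ u, (ℓ x u : ℝ≥0∞) ≤ a → u ∈ closure B := fun u hu =>
    subset_closure (hSB x (mem_of_mem_nhds hS) (NNReal.coe_le_coe.2 (ENNReal.coe_le_coe.1 hu)))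
  have hlt : (⨅ u ∈ Uset x, (ℓ x u : ℝ≥0∞) + V (f x u)) < a :=
    ((hV.bellman x).trans (hV.le_bound x)).trans_lt
      (ENNReal.coe_lt_coe.2 (lt_add_one (b x)))
  obtain ⟨u₀, hlt⟩ := iInf_lt_iff.1 hlt
  obtain ⟨hu₀, hlt⟩ := iInf_lt_iff.1 hlt
  have hC : IsCompact (Uset x ∩ closure B) := hB.isCompact_closure.inter_left (hU.isClosed x)
  have hu₀C : u₀ ∈ Uset x ∩ closure B := ⟨hu₀, hin u₀ (le_self_add.trans hlt.le)⟩
  obtain ⟨u, hu, hmin⟩ := LowerSemicontinuousOn.exists_isMinOn ⟨u₀, hu₀C⟩ hC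
    ((lsc_stage_section hf hl hV.lsc x).lowerSemicontinuousOn _)
  refine ⟨u, hu.1, fun v hv => ?_⟩
  by_cases hvB : v ∈ closure B
  · exact hmin ⟨hv, hvB⟩
  · have h1 : (a : ℝ≥0∞) < ℓ x v := not_le.1 fun h => hvB (hin v h)
    have h2 : (ℓ x u : ℝ≥0∞) + V (f x u) ≤ ℓ x u₀ + V (f x u₀) := hmin hu₀C
    exact h2.trans ((hlt.trans h1).le.trans le_self_add)

lemma PIInv.himp_locallyBounded (hV : PIInv f ℓ Uset b V) (hb : Continuous b)
    (hlb : ∀ (x : Fin n → ℝ) (a : ℝ), ∃ S ∈ 𝓝 x, ∃ B : Set (Fin m → ℝ),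
      Bornology.IsBounded B ∧ ∀ z ∈ S, {u : Fin m → ℝ | (ℓ z u : ℝ) ≤ a} ⊆ B) :
    LocallyBdd (Himp f ℓ Uset V) := by
  intro x
  obtain ⟨S, hS, B, hB, hSB⟩ := hlb x ((b x + 1 : ℝ≥0) : ℝ)
  have hnear : {z | b z < b x + 1} ∈ 𝓝 x :=
    (isOpen_lt hb continuous_const).mem_nhds (lt_add_one (b x))
  refine ⟨S ∩ {z | b z < b x + 1}, Filter.inter_mem hS hnear, closure B, hB.isCompact_closure,
    fun z hz u hu => subset_closure (hSB z hz.1 ?_)⟩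
  have h1 : (ℓ z u : ℝ≥0∞) ≤ b z :=
    le_self_add.trans ((hV.le_of_mem_himp hu).trans (hV.le_bound z))
  exact NNReal.coe_le_coe.2 ((ENNReal.coe_le_coe.1 h1).trans (le_of_lt hz.2))

/-- One step of the recursion preserves the invariant. -/
lemma PIInv.next (hV : PIInv f ℓ Uset b V) (hb : Continuous b)
    (hf : Continuous fun p : (Fin n → ℝ) × (Fin m → ℝ) => f p.1 p.2)
    (hl : Continuous fun p : (Fin n → ℝ) × (Fin m → ℝ) => ℓ p.1 p.2)
    (hlb : ∀ (x : Fin n → ℝ) (a : ℝ), ∃ S ∈ 𝓝 x, ∃ B : Set (Fin m → ℝ),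
      Bornology.IsBounded B ∧ ∀ z ∈ S, {u : Fin m → ℝ | (ℓ z u : ℝ) ≤ a} ⊆ B)
    (hU : ClosedGraph Uset) :
    PIInv f ℓ Uset b fun x => ⨅ (h : (Fin n → ℝ) → Fin m → ℝ)
      (_ : ∀ z, h z ∈ Hreg (Himp f ℓ Uset V) z), Jcost f ℓ x h := by
  have hne := hV.himp_nonempty hf hl hlb hU
  have hcg := closedGraph_hreg (Himp f ℓ Uset V)
  have hbd := locallyBdd_hreg (hV.himp_locallyBounded hb hlb)
  refine ⟨?_, fun x => ?_, fun x => ?_⟩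
  · have heq := iInf_jcost_eq hf hl hcg hbd (fun x => (hne x).mono (subset_hreg _ x))
    simp only [heq]
    exact lowerSemicontinuous_iSup fun N => lsc_finVal hf hl hcg hbd N
  · choose h hh using hne
    refine (iInf₂_le h fun z => subset_hreg _ z (hh z)).trans ?_
    exact (jcost_le_of_bellman (fun z => hV.le_of_mem_himp (hh z)) x).trans (hV.le_bound x)
  · refine le_iInf₂ fun h hh => ?_
    rw [jcost_eq]
    refine (iInf₂_le (h x) (hreg_subset hU (fun z u hu => hu.1) x (hh x))).trans ?_
    exact add_le_add le_rfl (iInf₂_le h hh)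

end Invariant

/-- recursive feasibility of PI⁺: the sets `Hⁱ(x)`,
`H_rⁱ(x)` and `H_r^{*,i}(x)` are nonempty for all `i` and `x`. -/
theorem piplus_recursive_feasibility
    (f : (Fin n → ℝ) → (Fin m → ℝ) → Fin n → ℝ)
    (ℓ : (Fin n → ℝ) → (Fin m → ℝ) → ℝ≥0)
    (Uset : (Fin n → ℝ) → Set (Fin m → ℝ))
    (hUne : ∀ x, (Uset x).Nonempty)
    (σ : (Fin n → ℝ) → ℝ≥0) (hσ : Continuous σ)
    -- initial admissible policy
    (h0 : (Fin n → ℝ) → Fin m → ℝ) (h0adm : ∀ x, h0 x ∈ Uset x)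
    -- regularity assumption
    (hf : Continuous fun p : (Fin n → ℝ) × (Fin m → ℝ) => f p.1 p.2)
    (hl : Continuous fun p : (Fin n → ℝ) × (Fin m → ℝ) => ℓ p.1 p.2)
    (hlb : ∀ (x : Fin n → ℝ) (a : ℝ), ∃ S ∈ 𝓝 x, ∃ B : Set (Fin m → ℝ),
      Bornology.IsBounded B ∧ ∀ z ∈ S, {u : Fin m → ℝ | (ℓ z u : ℝ) ≤ a} ⊆ B)
    (hUgraph : IsClosed {p : (Fin n → ℝ) × (Fin m → ℝ) | p.2 ∈ Uset p.1})
    (hV0lsc : LowerSemicontinuous fun x => Jcost f ℓ x h0)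
    (hsublevel : ∀ Δ : ℝ≥0, 0 < Δ → IsCompact {x : Fin n → ℝ | σ x ≤ Δ})
    -- detectability assumption
    (W : (Fin n → ℝ) → ℝ≥0) (hWcont : Continuous W)
    (alphaW chiW : ℝ≥0 → ℝ≥0) (halphaW : ClassKInf alphaW) (hchiW : ClassKInf chiW)
    (alphaWbar : ℝ≥0 → ℝ≥0) (halphaWbar_cont : Continuous alphaWbar)
    (halphaWbar_mono : Monotone alphaWbar) (halphaWbar_zero : alphaWbar 0 = 0)
    (hdet1 : ∀ x, W x ≤ alphaWbar (σ x))
    (hdet2 : ∀ x, ∀ u ∈ Uset x, W (f x u) + alphaW (σ x) ≤ W x + chiW (ℓ x u))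
    -- initial stabilizing bound `V_r⁰ ≤ ᾱ_V ∘ σ`
    (alphaV : ℝ≥0 → ℝ≥0) (halphaV : ClassKInf alphaV)
    (hV0 : ∀ x, Jcost f ℓ x h0 ≤ (alphaV (σ x) : ℝ≥0∞))
    :
    ∀ (i : ℕ) (x : Fin n → ℝ),
      (HseqPI f ℓ Uset h0 i x).Nonempty ∧
      (HrseqPI f ℓ Uset h0 i x).Nonempty ∧
      (HstarPI f ℓ Uset h0 i x).Nonempty := by
  have hinv : ∀ i, PIInv f ℓ Uset (fun x => alphaV (σ x)) (VR f ℓ Uset h0 i) := by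
    intro i
    induction i with
    | zero =>
      refine ⟨hV0lsc, hV0, fun x => (iInf₂_le (h0 x) (h0adm x)).trans ?_⟩
      exact (jcost_eq f ℓ x h0).ge
    | succ i ih => exact ih.next (halphaV.1.comp hσ) hf hl hlb hUgraph
  intro i x
  cases i with
  | zero => exact ⟨⟨_, rfl⟩, ⟨_, rfl⟩, ⟨_, rfl⟩⟩
  | succ i =>
    have hH := (hinv i).himp_nonempty hf hl hlb hUgraph x
    have hHr := hH.mono (subset_hreg _ x)
    have hbd := locallyBdd_hreg ((hinv i).himp_locallyBounded (halphaV.1.comp hσ) hlb)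
    refine ⟨hH, hHr, ?_⟩
    obtain ⟨u, hu, hmin⟩ := LowerSemicontinuousOn.exists_isMinOn hHr
      ((closedGraph_hreg _).isCompact hbd x)
      ((lsc_stage_section hf hl (hinv (i + 1)).lsc x).lowerSemicontinuousOn _)
    exact ⟨u, hu, fun v hv => hmin hv⟩

end
end
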